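/- Let q > 1 and let w be a positive non-increasing function on (0,1) with ∫_0^1 w(t) dt = 1. Then the Lorentz function space L_{w,q}(0,1) is isometric to a subspace of L_q if and only if w(t) = 1 for almost every t ∈ (0,1) (so that L_{w,q}(0,1) = L_q(0,1)). -/

import Mathlib

/-!
If `w = 1` almost everywhere, the identity works, because `|f|` and `f^*` have the same
distribution on `(0,1)` (`map_decRearr`).

Conversely, the idea is that for `q > 1` the function `x ↦ ∫ |x F + G|^q` is differentiable. Apply
`T` to the indicators of the two halves of `(0,1)`, obtaining `F` and `G`. The function
`x 1_A + 1_B` has `q`-th power of the Lorentz norm equal to `c₁ max(x,1)^q + c₂ min(x,1)^q`, where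
`c₁ = ∫_0^{1/2} w` and `c₂ = ∫_{1/2}^1 w`; its one-sided derivatives at `x = 1` are `q c₂` and
`q c₁`. Hence `c₁ = c₂`, and a non-increasing `w` with equal integrals on both halves is a.e.
constant.

Only the functions `|x F + G|^q` are known to be integrable (their integrals are nonzero), while
`F` and `G` themselves need not be measurable, so differentiability is used in the form that
the integral of the symmetric second difference is `o(h)`.
-/

open MeasureTheory Set

/-- The non-increasing rearrangement (on `(0,1)`) of a function `f : ℝ → ℝ`:
`f^*(t) = inf { s ≥ 0 : λ({u ∈ (0,1) : |f(u)| > s}) ≤ t }`. -/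
noncomputable def decRearr (f : ℝ → ℝ) (t : ℝ) : ℝ :=
  sInf {s : ℝ | 0 ≤ s ∧ volume {u ∈ Ioo (0:ℝ) 1 | s < |f u|} ≤ ENNReal.ofReal t}

open Filter Topology

/-! ### The rearrangement is equimeasurable with the function -/

lemma distr_anti (f : ℝ → ℝ) {s s' : ℝ} (h : s ≤ s') :
    volume {u ∈ Ioo (0:ℝ) 1 | s' < |f u|} ≤ volume {u ∈ Ioo (0:ℝ) 1 | s < |f u|} :=
  measure_mono fun _ hu => ⟨hu.1, h.trans_lt hu.2⟩

lemma decRearr_bddBelow (f : ℝ → ℝ) (t : ℝ) :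
    BddBelow {s : ℝ | 0 ≤ s ∧ volume {u ∈ Ioo (0:ℝ) 1 | s < |f u|} ≤ ENNReal.ofReal t} :=
  ⟨0, fun _ hs => hs.1⟩

lemma decRearr_nonneg (f : ℝ → ℝ) (t : ℝ) : 0 ≤ decRearr f t :=
  Real.sInf_nonneg fun _ hs => hs.1

/-- For `t > 0` the infimum defining `f^*(t)` is over a nonempty set, since a finite-valued
function has a distribution function tending to `0`. -/
lemma decRearr_nonempty (f : ℝ → ℝ) (hf : Measurable f) {t : ℝ} (ht : 0 < t) :
    {s : ℝ | 0 ≤ s ∧ volume {u ∈ Ioo (0:ℝ) 1 | s < |f u|} ≤ ENNReal.ofReal t}.Nonempty := by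
  have hanti : Antitone fun n : ℕ => {u ∈ Ioo (0:ℝ) 1 | (n:ℝ) < |f u|} := by
    intro m n hmn u hu
    have : (m:ℝ) ≤ n := by exact_mod_cast hmn
    exact ⟨hu.1, this.trans_lt hu.2⟩
  have hmeas : ∀ n : ℕ, NullMeasurableSet {u ∈ Ioo (0:ℝ) 1 | (n:ℝ) < |f u|} volume := fun n =>
    (measurableSet_Ioo.inter (measurableSet_lt measurable_const hf.abs)).nullMeasurableSet
  have hlim := tendsto_measure_iInter_atTop (μ := volume) hmeas hanti
    ⟨0, ((measure_mono fun _ hu => hu.1).trans_lt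
      (measure_Ioo_lt_top (μ := volume) (a := (0:ℝ)) (b := 1))).ne⟩
  have hemp : ⋂ n : ℕ, {u ∈ Ioo (0:ℝ) 1 | (n:ℝ) < |f u|} = ∅ := by
    ext u
    simp only [mem_iInter, mem_ofPred_eq, mem_empty_iff_false, iff_false]
    intro h
    obtain ⟨n, hn⟩ := exists_nat_gt |f u|
    exact lt_asymm hn (h n).2
  rw [hemp, measure_empty] at hlim
  obtain ⟨n, hn⟩ := (hlim.eventually_lt_const (ENNReal.ofReal_pos.2 ht)).exists
  exact ⟨n, n.cast_nonneg, hn.le⟩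

/-- The infimum is attained, by right continuity of the distribution function. -/
lemma decRearr_le_iff (f : ℝ → ℝ) (hf : Measurable f) {t s : ℝ} (ht : 0 < t) (hs : 0 ≤ s) :
    decRearr f t ≤ s ↔ volume {u ∈ Ioo (0:ℝ) 1 | s < |f u|} ≤ ENNReal.ofReal t := by
  refine ⟨fun h => ?_, fun h => csInf_le (decRearr_bddBelow f t) ⟨hs, h⟩⟩
  have key : ∀ s' > s, volume {u ∈ Ioo (0:ℝ) 1 | s' < |f u|} ≤ ENNReal.ofReal t := by
    intro s' hs'
    obtain ⟨r, hr, hrs⟩ := exists_lt_of_csInf_lt (decRearr_nonempty f hf ht) (h.trans_lt hs')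
    exact (distr_anti f hrs.le).trans hr.2
  have hU : {u ∈ Ioo (0:ℝ) 1 | s < |f u|}
      = ⋃ n : ℕ, {u ∈ Ioo (0:ℝ) 1 | s + 1 / ((n:ℝ) + 1) < |f u|} := by
    ext u
    simp only [mem_iUnion, mem_ofPred_eq]
    constructor
    · rintro ⟨h1, h2⟩
      obtain ⟨n, hn⟩ := exists_nat_one_div_lt (sub_pos.2 h2)
      exact ⟨n, h1, by linarith⟩
    · rintro ⟨n, h1, h2⟩
      have : 0 < 1 / ((n:ℝ) + 1) := by positivity
      exact ⟨h1, by linarith⟩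
  have hmono : Monotone fun n : ℕ => {u ∈ Ioo (0:ℝ) 1 | s + 1 / ((n:ℝ) + 1) < |f u|} := by
    intro m n hmn u hu
    refine ⟨hu.1, lt_of_le_of_lt ?_ hu.2⟩
    have := Nat.one_div_le_one_div (α := ℝ) hmn
    linarith
  rw [hU, hmono.measure_iUnion]
  exact iSup_le fun n => key _ (by
    have : 0 < 1 / ((n:ℝ) + 1) := by positivity
    linarith)

lemma decRearr_antitoneOn (f : ℝ → ℝ) (hf : Measurable f) :
    AntitoneOn (decRearr f) (Ioo 0 1) := by
  intro s hs t ht hst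
  refine csInf_le_csInf (decRearr_bddBelow f t) (decRearr_nonempty f hf hs.1) ?_
  exact fun r hr => ⟨hr.1, hr.2.trans (ENNReal.ofReal_le_ofReal hst)⟩

lemma decRearr_aemeasurable (f : ℝ → ℝ) (hf : Measurable f) :
    AEMeasurable (decRearr f) (volume.restrict (Ioo 0 1)) :=
  aemeasurable_restrict_of_antitoneOn measurableSet_Ioo (decRearr_antitoneOn f hf)

lemma map_decRearr (f : ℝ → ℝ) (hf : Measurable f) :
    (volume.restrict (Ioo (0:ℝ) 1)).map (decRearr f)
      = (volume.restrict (Ioo (0:ℝ) 1)).map (fun u => |f u|) := by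
  have hfin : IsFiniteMeasure (volume.restrict (Ioo (0:ℝ) 1)) := inferInstance
  have huniv : (volume.restrict (Ioo (0:ℝ) 1)) univ = 1 := by simp
  have hprob : IsProbabilityMeasure (volume.restrict (Ioo (0:ℝ) 1)) := ⟨huniv⟩
  have hp1 := Measure.isProbabilityMeasure_map (decRearr_aemeasurable f hf)
  have hp2 := Measure.isProbabilityMeasure_map
    (hf.abs.aemeasurable (μ := volume.restrict (Ioo (0:ℝ) 1)))
  refine Measure.ext_of_Iic _ _ fun s => ?_
  rw [← compl_Ioi, prob_compl_eq_one_sub measurableSet_Ioi,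
    prob_compl_eq_one_sub measurableSet_Ioi]
  congr 1
  rw [Measure.map_apply_of_aemeasurable (decRearr_aemeasurable f hf) measurableSet_Ioi,
    Measure.map_apply hf.abs measurableSet_Ioi]
  rcases lt_or_ge s 0 with hs | hs
  · rw [show decRearr f ⁻¹' Ioi s = univ from
      eq_univ_of_forall fun t => hs.trans_le (decRearr_nonneg f t),
      show (fun u => |f u|) ⁻¹' Ioi s = univ from
      eq_univ_of_forall fun t => hs.trans_le (abs_nonneg _)]
  · set d := volume {u ∈ Ioo (0:ℝ) 1 | s < |f u|} with hd
    have hd1 : d ≤ 1 := (measure_mono fun _ hu => hu.1).trans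
      (by simp : volume (Ioo (0:ℝ) 1) ≤ 1)
    have hdt : d ≠ ⊤ := (hd1.trans_lt ENNReal.one_lt_top).ne
    have hd1' : d.toReal ≤ 1 := ENNReal.toReal_le_of_le_ofReal zero_le_one (by simpa using hd1)
    rw [Measure.restrict_apply' measurableSet_Ioo, Measure.restrict_apply' measurableSet_Ioo]
    have e1 : decRearr f ⁻¹' Ioi s ∩ Ioo 0 1 = Ioo 0 d.toReal := by
      ext t
      simp only [mem_inter_iff, mem_preimage, mem_Ioi, mem_Ioo]
      have hiff : 0 < t → (s < decRearr f t ↔ t < d.toReal) := fun ht => by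
        rw [← not_le, decRearr_le_iff f hf ht hs, not_le, ← hd,
          ENNReal.ofReal_lt_iff_lt_toReal ht.le hdt]
      constructor
      · rintro ⟨h1, h2, h3⟩
        exact ⟨h2, (hiff h2).1 h1⟩
      · rintro ⟨h1, h2⟩
        exact ⟨(hiff h1).2 h2, h1, h2.trans_le hd1'⟩
    have e2 : (fun u => |f u|) ⁻¹' Ioi s ∩ Ioo 0 1 = {u ∈ Ioo (0:ℝ) 1 | s < |f u|} := by
      ext u
      simp [and_comm]
    rw [e1, e2, Real.volume_Ioo, sub_zero, ENNReal.ofReal_toReal hdt]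

lemma integral_decRearr_rpow (q : ℝ) (f : ℝ → ℝ) (hf : Measurable f) :
    ∫ u in Ioo (0:ℝ) 1, |f u| ^ q = ∫ t in Ioo (0:ℝ) 1, decRearr f t ^ q := by
  have hm : Measurable fun x : ℝ => x ^ q := measurable_id.pow_const q
  rw [← integral_map (φ := fun u => |f u|) (f := fun x : ℝ => x ^ q) hf.abs.aemeasurable
      hm.aestronglyMeasurable,
    ← map_decRearr f hf,
    integral_map (f := fun x : ℝ => x ^ q) (decRearr_aemeasurable f hf) hm.aestronglyMeasurable]

/-! ### Two-step functions -/

/-- On `(0,1)`, the indicator of the left half `(0,1/2)`; the half-line `(-∞,1/2)` is used since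
values outside `(0,1)` do not matter. -/
noncomputable def leftInd : ℝ → ℝ := (Iio (1/2 : ℝ)).indicator 1

/-- On `(0,1)`, the indicator of the right half `[1/2,1)`. -/
noncomputable def rightInd : ℝ → ℝ := (Ici (1/2 : ℝ)).indicator 1

lemma twoStep_apply_left (x : ℝ) {u : ℝ} (hu : u < 1/2) : (x • leftInd + rightInd) u = x := by
  have h1 : u ∈ Iio (1/2 : ℝ) := hu
  have h2 : u ∉ Ici (1/2 : ℝ) := not_le.2 hu
  simp only [leftInd, rightInd, Pi.add_apply, Pi.smul_apply, indicator_of_mem h1,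
    indicator_of_notMem h2]
  simp

lemma twoStep_apply_right (x : ℝ) {u : ℝ} (hu : 1/2 ≤ u) : (x • leftInd + rightInd) u = 1 := by
  have h1 : u ∉ Iio (1/2 : ℝ) := not_lt.2 hu
  have h2 : u ∈ Ici (1/2 : ℝ) := hu
  simp only [leftInd, rightInd, Pi.add_apply, Pi.smul_apply, indicator_of_mem h2,
    indicator_of_notMem h1]
  simp

lemma twoStep_measurable (x : ℝ) : Measurable (x • leftInd + rightInd) :=
  ((measurable_one.indicator measurableSet_Iio).const_smul x).add
    (measurable_one.indicator measurableSet_Ici)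

lemma decRearr_twoStep_left {x t : ℝ} (hx : 0 ≤ x) (ht : t ∈ Ioo (0:ℝ) (1/2)) :
    decRearr (x • leftInd + rightInd) t = max x 1 := by
  have key : {s : ℝ | 0 ≤ s ∧ volume {u ∈ Ioo (0:ℝ) 1 | s < |(x • leftInd + rightInd) u|}
      ≤ ENNReal.ofReal t} = Ici (max x 1) := by
    ext s
    simp only [mem_ofPred_eq, mem_Ici]
    have hhalf : ENNReal.ofReal t < ENNReal.ofReal (1/2) :=
      (ENNReal.ofReal_lt_ofReal_iff (by norm_num)).2 ht.2
    constructor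
    · rintro ⟨hs, h⟩
      by_contra! hlt
      refine absurd h (not_le.2 (hhalf.trans_le ?_))
      rcases lt_max_iff.1 hlt with h1 | h1
      · calc ENNReal.ofReal (1/2) = volume (Ioo (0:ℝ) (1/2)) := by simp
          _ ≤ volume {u ∈ Ioo (0:ℝ) 1 | s < |(x • leftInd + rightInd) u|} :=
            measure_mono fun u hu => ⟨⟨hu.1, by linarith [hu.2]⟩, by
            rw [twoStep_apply_left x hu.2, abs_of_nonneg hx]; exact h1⟩
      · calc ENNReal.ofReal (1/2) = volume (Ioo (1/2:ℝ) 1) := by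
              rw [Real.volume_Ioo]; norm_num
          _ ≤ volume {u ∈ Ioo (0:ℝ) 1 | s < |(x • leftInd + rightInd) u|} :=
            measure_mono fun u hu => ⟨⟨by linarith [hu.1], hu.2⟩, by
            rw [twoStep_apply_right x hu.1.le, abs_one]; exact h1⟩
    · intro h
      obtain ⟨h1, h2⟩ := max_le_iff.1 h
      refine ⟨hx.trans h1, ?_⟩
      have : {u ∈ Ioo (0:ℝ) 1 | s < |(x • leftInd + rightInd) u|} = ∅ := by
        ext u
        simp only [mem_ofPred_eq, mem_empty_iff_false, iff_false, not_and, not_lt]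
        intro _
        rcases lt_or_ge u (1/2) with hu | hu
        · rwa [twoStep_apply_left x hu, abs_of_nonneg hx]
        · rwa [twoStep_apply_right x hu, abs_one]
      rw [this, measure_empty]
      exact zero_le
  rw [decRearr, key, csInf_Ici]

lemma decRearr_twoStep_right {x t : ℝ} (hx : 0 ≤ x) (ht : t ∈ Ico (1/2:ℝ) 1) :
    decRearr (x • leftInd + rightInd) t = min x 1 := by
  have key : {s : ℝ | 0 ≤ s ∧ volume {u ∈ Ioo (0:ℝ) 1 | s < |(x • leftInd + rightInd) u|}
      ≤ ENNReal.ofReal t} = Ici (min x 1) := by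
    ext s
    simp only [mem_ofPred_eq, mem_Ici]
    have hone : ENNReal.ofReal t < ENNReal.ofReal 1 :=
      (ENNReal.ofReal_lt_ofReal_iff (by norm_num)).2 ht.2
    have hhalf : ENNReal.ofReal (1/2) ≤ ENNReal.ofReal t := ENNReal.ofReal_le_ofReal ht.1
    constructor
    · rintro ⟨hs, h⟩
      by_contra! hlt
      refine absurd h (not_le.2 (hone.trans_le ?_))
      obtain ⟨h1, h2⟩ := lt_min_iff.1 hlt
      calc ENNReal.ofReal 1 = volume (Ioo (0:ℝ) 1) := by simp
          _ ≤ volume {u ∈ Ioo (0:ℝ) 1 | s < |(x • leftInd + rightInd) u|} :=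
            measure_mono fun u hu => ⟨hu, by
            rcases lt_or_ge u (1/2) with hu | hu
            · rwa [twoStep_apply_left x hu, abs_of_nonneg hx]
            · rwa [twoStep_apply_right x hu, abs_one]⟩
    · intro h
      refine ⟨(le_min hx zero_le_one).trans h, le_trans ?_ hhalf⟩
      rcases min_le_iff.1 h with h1 | h1
      · calc _ ≤ volume (Ico (1/2:ℝ) 1) := measure_mono fun u hu => by
              refine ⟨?_, hu.1.2⟩
              by_contra! hlt
              have := hu.2
              rw [twoStep_apply_left x hlt, abs_of_nonneg hx] at this
              exact absurd h1 (not_le.2 this)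
          _ = _ := by rw [Real.volume_Ico]; norm_num
      · calc _ ≤ volume (Ioo (0:ℝ) (1/2)) := measure_mono fun u hu => by
              refine ⟨hu.1.1, ?_⟩
              by_contra! hlt
              have := hu.2
              rw [twoStep_apply_right x hlt, abs_one] at this
              exact absurd h1 (not_le.2 this)
          _ = _ := by rw [Real.volume_Ioo]; norm_num
  rw [decRearr, key, csInf_Ici]

lemma Ioo_eq_halves : Ioo (0:ℝ) 1 = Ioo 0 (1/2) ∪ Ico (1/2) 1 :=
  (Ioo_union_Ico_eq_Ioo (by norm_num) (by norm_num)).symm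

lemma halves_disjoint : Disjoint (Ioo (0:ℝ) (1/2)) (Ico (1/2) 1) := by
  rw [Set.disjoint_left]
  exact fun u h1 h2 => absurd h1.2 (not_lt.2 h2.1)

lemma twoStep_integral (q : ℝ) (w : ℝ → ℝ) (hw : IntegrableOn w (Ioo 0 1)) {x : ℝ} (hx : 0 ≤ x) :
    IntegrableOn (fun t => decRearr (x • leftInd + rightInd) t ^ q * w t) (Ioo 0 1) ∧
    ∫ t in Ioo (0:ℝ) 1, decRearr (x • leftInd + rightInd) t ^ q * w t
      = (max x 1) ^ q * (∫ t in Ioo (0:ℝ) (1/2), w t)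
        + (min x 1) ^ q * ∫ t in Ico (1/2:ℝ) 1, w t := by
  rw [Ioo_eq_halves] at hw ⊢
  have hw1 := hw.left_of_union
  have hw2 := hw.right_of_union
  have e1 : EqOn (fun t => decRearr (x • leftInd + rightInd) t ^ q * w t)
      (fun t => (max x 1) ^ q * w t) (Ioo (0:ℝ) (1/2)) := fun t ht => by
    simp only [decRearr_twoStep_left hx ht]
  have e2 : EqOn (fun t => decRearr (x • leftInd + rightInd) t ^ q * w t)
      (fun t => (min x 1) ^ q * w t) (Ico (1/2:ℝ) 1) := fun t ht => by
    simp only [decRearr_twoStep_right hx ht]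
  have i1 := (integrableOn_congr_fun e1 measurableSet_Ioo).2 (hw1.const_mul ((max x 1) ^ q))
  have i2 := (integrableOn_congr_fun e2 measurableSet_Ico).2 (hw2.const_mul ((min x 1) ^ q))
  refine ⟨i1.union i2, ?_⟩
  rw [setIntegral_union halves_disjoint measurableSet_Ico i1 i2,
    setIntegral_congr_fun measurableSet_Ioo e1, setIntegral_congr_fun measurableSet_Ico e2,
    integral_const_mul, integral_const_mul]

/-! ### Differentiability of `x ↦ ∫ |x F + G|^q` at `x = 1` -/

lemma convexOn_line (q : ℝ) (hq : 1 ≤ q) (a b : ℝ) :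
    ConvexOn ℝ univ fun x : ℝ => |x * a + b| ^ q := by
  refine ⟨convex_univ, fun x _ y _ α β hα hβ hαβ => ?_⟩
  have h1 : |(α • x + β • y) * a + b| ≤ α * |x * a + b| + β * |y * a + b| := by
    have : (α • x + β • y) * a + b = α * (x * a + b) + β * (y * a + b) := by
      simp only [smul_eq_mul]
      linear_combination -b * hαβ
    rw [this]
    refine (abs_add_le _ _).trans ?_
    rw [abs_mul, abs_mul, abs_of_nonneg hα, abs_of_nonneg hβ]
  refine (Real.rpow_le_rpow (abs_nonneg _) h1 (by linarith)).trans ?_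
  exact (convexOn_rpow hq).2 (mem_Ici.2 (abs_nonneg _)) (mem_Ici.2 (abs_nonneg _)) hα hβ hαβ

/-- The symmetric second difference of `x ↦ |x a + b|^q` at `1`, with step `h`. -/
noncomputable def secondDiff (q a b h : ℝ) : ℝ :=
  |(1 + h) * a + b| ^ q + |(1 - h) * a + b| ^ q - 2 * |1 * a + b| ^ q

lemma secondDiff_nonneg {q : ℝ} (hq : 1 ≤ q) (a b h : ℝ) : 0 ≤ secondDiff q a b h := by
  have := (convexOn_line q hq a b).2 (mem_univ (1 + h)) (mem_univ (1 - h))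
    (by norm_num : (0:ℝ) ≤ 1/2) (by norm_num : (0:ℝ) ≤ 1/2) (by norm_num)
  simp only [smul_eq_mul] at this
  rw [show (1/2 : ℝ) * (1 + h) + 1/2 * (1 - h) = 1 by ring] at this
  unfold secondDiff
  linarith

lemma secondDiff_le {q : ℝ} (hq : 1 ≤ q) (a b : ℝ) {h : ℝ} (h0 : 0 ≤ h) (h1 : h ≤ 1) :
    secondDiff q a b h ≤ h * secondDiff q a b 1 := by
  have A := (convexOn_line q hq a b).2 (mem_univ (1 + 1)) (mem_univ 1)
    h0 (sub_nonneg.2 h1) (by ring)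
  have B := (convexOn_line q hq a b).2 (mem_univ (1 - 1)) (mem_univ 1)
    h0 (sub_nonneg.2 h1) (by ring)
  simp only [smul_eq_mul] at A B
  rw [show h * (1 + 1) + (1 - h) * 1 = 1 + h by ring] at A
  rw [show h * (1 - 1) + (1 - h) * 1 = 1 - h by ring] at B
  unfold secondDiff
  linarith

/-- If `φ` and `ψ` have derivatives `d` and `e` at `0`, then
`(φ(h) + ψ(-h) - φ(0) - ψ(0)) / h → d - e` along `h = 1/(n+1)`. -/
lemma tendsto_symm_quot {φ ψ : ℝ → ℝ} {d e : ℝ} (hφ : HasDerivAt φ d 0) (hψ : HasDerivAt ψ e 0) :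
    Tendsto (fun n : ℕ => (φ (1 / ((n:ℝ) + 1)) + ψ (-(1 / ((n:ℝ) + 1))) - φ 0 - ψ 0)
      / (1 / ((n:ℝ) + 1))) atTop (𝓝 (d - e)) := by
  have h1 : HasDerivAt (fun h => φ h + ψ (-h)) (d - e) 0 := by
    have h2 : HasDerivAt (fun h : ℝ => ψ (-h)) (-e) 0 := by
      have h3 : HasDerivAt ψ e (-0) := by simpa using hψ
      have h4 := h3.comp (0:ℝ) (hasDerivAt_neg (0:ℝ))
      rw [mul_neg_one] at h4
      exact h4
    rw [sub_eq_add_neg]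
    exact hφ.add h2
  have hlim : Tendsto (fun n : ℕ => 1 / ((n:ℝ) + 1)) atTop (𝓝[≠] 0) :=
    tendsto_nhdsWithin_iff.2 ⟨tendsto_one_div_add_atTop_nhds_zero_nat,
      Eventually.of_forall fun n => by
        have : 0 < 1 / ((n:ℝ) + 1) := by positivity
        exact this.ne'⟩
  refine ((hasDerivAt_iff_tendsto_slope.1 h1).comp hlim).congr fun n => ?_
  simp only [Function.comp, slope_def_field, sub_zero, neg_zero]
  ring

lemma secondDiff_tendsto {q : ℝ} (hq : 1 < q) (a b : ℝ) :
    Tendsto (fun n : ℕ => secondDiff q a b (1 / ((n:ℝ) + 1)) / (1 / ((n:ℝ) + 1)))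
      atTop (𝓝 0) := by
  have h1 : HasDerivAt (fun h : ℝ => (1 + h) * a + b) a 0 := by
    simpa using (((hasDerivAt_id (0:ℝ)).const_add 1).mul_const a).add_const b
  have h2 := (hasDerivAt_abs_rpow ((1 + 0) * a + b) hq).comp (0:ℝ) h1
  have := tendsto_symm_quot h2 h2
  rw [sub_self] at this
  refine this.congr fun n => ?_
  simp only [Function.comp, secondDiff, add_zero, ← sub_eq_add_neg]
  ring

lemma half_integrals_eq {q : ℝ} (hq : 1 < q) {Ω : Type} [MeasurableSpace Ω] (μ : Measure Ω)
    (F G : Ω → ℝ) {c₁ c₂ : ℝ} (hc₁ : 0 < c₁) (hc₂ : 0 ≤ c₂)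
    (h : ∀ x : ℝ, 0 ≤ x →
      ∫ ω, |x * F ω + G ω| ^ q ∂μ = (max x 1) ^ q * c₁ + (min x 1) ^ q * c₂) :
    c₁ = c₂ := by
  -- a nonzero Bochner integral forces integrability
  have hint : ∀ x : ℝ, 0 ≤ x → Integrable (fun ω => |x * F ω + G ω| ^ q) μ := by
    intro x hx
    refine Integrable.of_integral_ne_zero ?_
    rw [h x hx]
    have : 0 < max x 1 := lt_max_of_lt_right one_pos
    have : 0 ≤ min x 1 := le_min hx zero_le_one
    positivity
  have hsd : ∀ k : ℝ, 0 ≤ k → k ≤ 1 → Integrable (fun ω => secondDiff q (F ω) (G ω) k) μ :=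
    fun k h0 h1 => ((hint (1 + k) (by linarith)).add (hint (1 - k) (by linarith))).sub
      ((hint 1 zero_le_one).const_mul 2)
  have hpos : ∀ n : ℕ, 0 < 1 / ((n:ℝ) + 1) := fun n => by positivity
  have hle : ∀ n : ℕ, 1 / ((n:ℝ) + 1) ≤ 1 := fun n => by
    rw [div_le_one (by positivity)]
    linarith [n.cast_nonneg (α := ℝ)]
  have L1 : Tendsto (fun n : ℕ => ∫ ω, secondDiff q (F ω) (G ω) (1 / ((n:ℝ) + 1))
      / (1 / ((n:ℝ) + 1)) ∂μ) atTop (𝓝 (∫ _, (0:ℝ) ∂μ)) := by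
    refine tendsto_integral_of_dominated_convergence (fun ω => secondDiff q (F ω) (G ω) 1)
      (fun n => ((hsd _ (hpos n).le (hle n)).div_const _).aestronglyMeasurable)
      (hsd 1 zero_le_one le_rfl) (fun n => Eventually.of_forall fun ω => ?_)
      (Eventually.of_forall fun ω => secondDiff_tendsto hq _ _)
    rw [Real.norm_of_nonneg (div_nonneg (secondDiff_nonneg hq.le _ _ _) (hpos n).le),
      div_le_iff₀ (hpos n), mul_comm]
    exact secondDiff_le hq.le _ _ (hpos n).le (hle n)
  rw [integral_zero] at L1
  have hd : HasDerivAt (fun k : ℝ => (1 + k) ^ q) q 0 := by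
    have h1 : HasDerivAt (fun k : ℝ => 1 + k) 1 0 := (hasDerivAt_id (0:ℝ)).const_add 1
    simpa using h1.rpow_const (p := q) (Or.inl (by norm_num))
  have L2 := tendsto_symm_quot (hd.mul_const c₁) (hd.mul_const c₂)
  have heq := tendsto_nhds_unique (L1.congr fun n => ?_) L2
  · have : q * (c₁ - c₂) = 0 := by linarith
    rcases mul_eq_zero.1 this with h0 | h0 <;> linarith
  · have h0 := hpos n
    have h1 := hle n
    set k := 1 / ((n:ℝ) + 1)
    rw [integral_div]
    congr 1
    simp only [secondDiff]
    have i1 := hint (1 + k) (by linarith)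
    have i2 := hint (1 - k) (by linarith)
    have i3 := (hint 1 zero_le_one).const_mul 2
    rw [integral_sub (by exact i1.add i2) i3, integral_add i1 i2, integral_const_mul, h _ (by linarith), h _ (by linarith),
      h 1 zero_le_one, max_eq_left (by linarith : (1:ℝ) ≤ 1 + k),
      min_eq_right (by linarith : (1:ℝ) ≤ 1 + k), max_eq_right (by linarith : 1 - k ≤ 1),
      min_eq_left (by linarith : 1 - k ≤ 1)]
    simp only [max_self, min_self, Real.one_rpow, add_zero, ← sub_eq_add_neg]
    ring

/-! ### The weight -/

/-- A non-increasing weight whose integrals over both halves agree is a.e. constant: compare it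
with its value at `1/2`. -/
lemma weight_eq_one (w : ℝ → ℝ)
    (hw_anti : ∀ s t, s ∈ Ioo (0:ℝ) 1 → t ∈ Ioo (0:ℝ) 1 → s ≤ t → w t ≤ w s)
    (hw : IntegrableOn w (Ioo 0 1)) (hw_int : (∫ t in Ioo (0:ℝ) 1, w t) = 1)
    (heq : (∫ t in Ioo (0:ℝ) (1/2), w t) = ∫ t in Ico (1/2:ℝ) 1, w t) :
    ∀ᵐ t ∂(volume.restrict (Ioo (0:ℝ) 1)), w t = 1 := by
  rw [Ioo_eq_halves] at hw hw_int ⊢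
  have hw1 := hw.left_of_union
  have hw2 := hw.right_of_union
  rw [setIntegral_union halves_disjoint measurableSet_Ico hw1 hw2] at hw_int
  have hhalf : (1/2:ℝ) ∈ Ioo (0:ℝ) 1 := by norm_num
  have m1 : ∀ t ∈ Ioo (0:ℝ) (1/2), w (1/2) ≤ w t := fun t ht =>
    hw_anti _ _ ⟨ht.1, by linarith [ht.2]⟩ hhalf ht.2.le
  have m2 : ∀ t ∈ Ico (1/2:ℝ) 1, w t ≤ w (1/2) := fun t ht =>
    hw_anti _ _ hhalf ⟨by linarith [ht.1], ht.2⟩ ht.1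
  have f1 : IntegrableOn (fun _ : ℝ => w (1/2)) (Ioo (0:ℝ) (1/2)) :=
    integrableOn_const (by simp)
  have f2 : IntegrableOn (fun _ : ℝ => w (1/2)) (Ico (1/2:ℝ) 1) :=
    integrableOn_const (by simp)
  have c1 : ∫ _ in Ioo (0:ℝ) (1/2), w (1/2) = 1/2 * w (1/2) := by
    rw [setIntegral_const, Measure.real, Real.volume_Ioo, sub_zero,
      ENNReal.toReal_ofReal (by norm_num), smul_eq_mul]
  have c2 : ∫ _ in Ico (1/2:ℝ) 1, w (1/2) = 1/2 * w (1/2) := by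
    rw [setIntegral_const, Measure.real, Real.volume_Ico,
      ENNReal.toReal_ofReal (by norm_num), smul_eq_mul]
    norm_num
  have l1 := setIntegral_mono_on f1 hw1 measurableSet_Ioo m1
  have l2 := setIntegral_mono_on hw2 f2 measurableSet_Ico m2
  rw [c1] at l1
  rw [c2] at l2
  have hone : w (1/2) = 1 := by linarith
  have z1 : ∫ t in Ioo (0:ℝ) (1/2), (w t - w (1/2)) = 0 := by
    rw [integral_sub hw1 f1, c1]; linarith
  have z2 : ∫ t in Ico (1/2:ℝ) 1, (w (1/2) - w t) = 0 := by
    rw [integral_sub f2 hw2, c2]; linarith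
  rw [setIntegral_eq_zero_iff_of_nonneg_ae
    ((ae_restrict_iff' measurableSet_Ioo).2 (Eventually.of_forall fun t ht =>
      sub_nonneg.2 (m1 t ht))) (hw1.sub f1)] at z1
  rw [setIntegral_eq_zero_iff_of_nonneg_ae
    ((ae_restrict_iff' measurableSet_Ico).2 (Eventually.of_forall fun t ht =>
      sub_nonneg.2 (m2 t ht))) (f2.sub hw2)] at z2
  rw [ae_restrict_union_iff]
  constructor
  · filter_upwards [z1] with t ht
    simp only [Pi.zero_apply] at ht
    linarith
  · filter_upwards [z2] with t ht
    simp only [Pi.zero_apply] at ht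
    linarith

/-- For `q > 1` and a positive non-increasing weight `w` on `(0,1)` with
`∫_0^1 w = 1`, the Lorentz function space `L_{w,q}(0,1)` is isometric to a
subspace of `L_q` iff `w = 1` a.e. on `(0,1)` (so that `L_{w,q} = L_q`). -/
theorem stmt3 (q : ℝ) (hq : 1 < q) (w : ℝ → ℝ)
    (hw_pos : ∀ t ∈ Ioo (0:ℝ) 1, 0 < w t)
    (hw_anti : ∀ s t, s ∈ Ioo (0:ℝ) 1 → t ∈ Ioo (0:ℝ) 1 → s ≤ t → w t ≤ w s)
    (hw_int : (∫ t in Ioo (0:ℝ) 1, w t) = 1) :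
    (∃ (Ω : Type) (_ : MeasurableSpace Ω) (μ : Measure Ω)
        (T : (ℝ → ℝ) →ₗ[ℝ] (Ω → ℝ)),
      ∀ f : ℝ → ℝ, Measurable f →
        (∫⁻ t in Ioo (0:ℝ) 1, ENNReal.ofReal (decRearr f t ^ q * w t)) < ⊤ →
        (∫ ω, |T f ω| ^ q ∂μ) = ∫ t in Ioo (0:ℝ) 1, decRearr f t ^ q * w t) ↔
    (∀ᵐ t ∂(volume.restrict (Ioo (0:ℝ) 1)), w t = 1) := by
  constructor
  · rintro ⟨Ω, _, μ, T, hT⟩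
    have hw : IntegrableOn w (Ioo 0 1) := Integrable.of_integral_ne_zero (by rw [hw_int]; simp)
    have hw' := hw
    have hsum := hw_int
    rw [Ioo_eq_halves] at hw' hsum
    have hw1 := hw'.left_of_union
    have hw2 := hw'.right_of_union
    rw [setIntegral_union halves_disjoint measurableSet_Ico hw1 hw2] at hsum
    have hc2 : 0 ≤ ∫ t in Ico (1/2:ℝ) 1, w t :=
      setIntegral_nonneg measurableSet_Ico fun t ht =>
        (hw_pos t ⟨by linarith [ht.1], ht.2⟩).le
    have hc1 : 0 < ∫ t in Ioo (0:ℝ) (1/2), w t := by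
      rw [setIntegral_pos_iff_support_of_nonneg_ae
        ((ae_restrict_iff' measurableSet_Ioo).2 (Eventually.of_forall fun t ht =>
          (hw_pos t ⟨ht.1, by linarith [ht.2]⟩).le)) hw1]
      have : Function.support w ∩ Ioo (0:ℝ) (1/2) = Ioo 0 (1/2) :=
        inter_eq_right.2 fun t ht => (hw_pos t ⟨ht.1, by linarith [ht.2]⟩).ne'
      rw [this, Real.volume_Ioo]
      simp
    refine weight_eq_one w hw_anti hw hw_int
      (half_integrals_eq hq μ (T leftInd) (T rightInd) hc1 hc2 fun x hx => ?_)
    obtain ⟨i1, i2⟩ := twoStep_integral q w hw hx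
    rw [← i2, ← hT _ (twoStep_measurable x)]
    · simp [map_add, map_smul]
    · exact i1.lintegral_lt_top
  · intro hw
    refine ⟨ℝ, inferInstance, volume.restrict (Ioo 0 1), LinearMap.id, fun f hf _ => ?_⟩
    rw [LinearMap.id_apply, integral_decRearr_rpow q f hf]
    refine integral_congr_ae ?_
    filter_upwards [hw] with t ht
    rw [ht, mul_one]
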